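/- arXiv:1805.12159 — 3 statements merged into one kernel-verified Lean document; each statement's English description precedes it below -/
import Mathlib

section
/- Let G be a finite p-group (p a prime) and M a maximal subgroup of G. Then M is quotient solitary in G if and only if G is cyclic. -/
/-!
Every maximal subgroup of a finite `p`-group is normal of index `p`, so all quotients of `G` by
maximal subgroups are isomorphic to each other. Hence a quotient solitary maximal subgroup `M` is
the only maximal subgroup, and any `x ∉ M` generates `G`: a proper `⟨x⟩` would lie in a maximal
subgroup, that is, in `M`. Conversely, a subgroup of a finite cyclic group is determined by its
order `n`, being the set of all solutions of `a ^ n = 1`, so it is determined by the isomorphism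
class of the quotient.
-/

/-- A normal subgroup `H` of a group `G` is *quotient solitary* if for every normal
subgroup `K` of `G`, `G/K ≅ G/H` implies `K = H`. -/
def IsQuotientSolitary {G : Type*} [Group G] (H : Subgroup G) : Prop :=
  ∃ hH : H.Normal, ∀ (K : Subgroup G) (hK : K.Normal),
    (letI := hH; letI := hK; Nonempty ((G ⧸ K) ≃* (G ⧸ H))) → K = H

theorem IsPGroup.index_eq_of_isCoatom {G : Type*} [Group G] [Finite G]
    {p : ℕ} (hp : p.Prime) (hG : IsPGroup p G) {M : Subgroup G} (hM : IsCoatom M) :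
    M.index = p := by
  have := Fact.mk hp
  obtain ⟨m, hm⟩ := IsPGroup.iff_card.mp (hG.to_subgroup M)
  obtain ⟨k, hk⟩ := hG.index M
  have h_card := M.card_mul_index
  have hk0 : k ≠ 0 := by
    rintro rfl
    exact hM.1 (Subgroup.index_eq_one.mp (by simpa using hk))
  -- By Sylow's theorem `M` lies in a subgroup of order `p * |M|`, which must be all of `G`.
  have hdvd : p ^ (m + 1) ∣ Nat.card G := by
    rw [← h_card, hm, hk, ← pow_add]
    exact pow_dvd_pow p (by omega)
  obtain ⟨K, hK, hMK⟩ := Sylow.exists_subgroup_card_pow_succ hdvd hm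
  have hlt : M < K := by
    refine lt_of_le_of_ne hMK ?_
    rintro rfl
    have := Nat.pow_right_injective hp.two_le (hm.symm.trans hK)
    omega
  rw [hM.2 K hlt, Subgroup.card_top] at hK
  rw [hK, hm, pow_succ] at h_card
  exact Nat.eq_of_mul_eq_mul_left (pow_pos hp.pos m) h_card

theorem IsPGroup.normal_of_isCoatom {G : Type*} [Group G] [Finite G]
    {p : ℕ} (hp : p.Prime) (hG : IsPGroup p G) {M : Subgroup G} (hM : IsCoatom M) :
    M.Normal := by
  have := Fact.mk hp
  have := hG.isNilpotent
  exact Subgroup.NormalizerCondition.normal_of_coatom M Group.normalizerCondition_of_isNilpotent hM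

theorem IsCyclic.subgroup_eq_of_card_eq {G : Type*} [Group G] [Finite G] [IsCyclic G]
    {H K : Subgroup G} (h : Nat.card H = Nat.card K) : H = K := by
  classical
  have := Fintype.ofFinite G
  -- A subgroup of order `n` is contained in the at most `n` solutions of `a ^ n = 1`.
  have key : ∀ L : Subgroup G,
      (L : Set G) = {a : G | a ^ Nat.card L = 1} := by
    intro L
    refine Set.eq_of_subset_of_ncard_le ?_ ?_ (Set.toFinite _)
    · intro a ha
      exact congrArg Subtype.val (pow_card_eq_one' (x := (⟨a, ha⟩ : L)))
    · have := IsCyclic.card_pow_eq_one_le (α := G) (n := Nat.card L) Nat.card_pos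
      rw [← Set.ncard_coe_finset] at this
      rw [← Nat.card_coe_set_eq (L : Set G)]
      simpa using this
  exact SetLike.coe_injective (by rw [key H, key K, h])

/-- A maximal subgroup of a finite p-group is quotient solitary iff the group is cyclic. -/
theorem maximal_isQuotientSolitary_iff_isCyclic {G : Type*} [Group G] [Finite G]
    (p : ℕ) (hp : p.Prime) (hG : IsPGroup p G)
    (M : Subgroup G) (hM : IsCoatom M) :
    IsQuotientSolitary M ↔ IsCyclic G := by
  have := Fact.mk hp
  constructor
  · rintro ⟨hMn, hsol⟩
    obtain ⟨x, hx⟩ : ∃ x, x ∉ M := by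
      by_contra! h
      exact hM.1 ((Subgroup.eq_top_iff' M).mpr h)
    rcases eq_top_or_exists_le_coatom (Subgroup.zpowers x) with h | ⟨K, hK, hxK⟩
    · exact ⟨x, fun y => (Subgroup.eq_top_iff' _).mp h y⟩
    · have hKn : K.Normal := hG.normal_of_isCoatom hp hK
      have hKM : K = M := hsol K hKn
        ⟨mulEquivOfPrimeCardEq (p := p) (hG.index_eq_of_isCoatom hp hK)
          (hG.index_eq_of_isCoatom hp hM)⟩
      exact absurd (hKM ▸ hxK (Subgroup.mem_zpowers x)) hx
  · intro hc
    refine ⟨hG.normal_of_isCoatom hp hM, fun K hK => ?_⟩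
    rintro ⟨e⟩
    have h_index : K.index = M.index := Nat.card_congr e.toEquiv
    apply IsCyclic.subgroup_eq_of_card_eq
    have h_eq := K.card_mul_index.trans M.card_mul_index.symm
    rw [h_index] at h_eq
    exact Nat.eq_of_mul_eq_mul_right (Nat.pos_of_ne_zero M.index_ne_zero_of_finite) h_eq
end

section
/- Let G be a finite abelian p-group and H a proper quotient solitary subgroup of G (H ≠ G). Then H is contained in the Frattini subgroup Φ(G) of G. -/
theorem card_quotient_of_isCoatom {G : Type*} [CommGroup G] [Finite G] {p : ℕ} (hp : p.Prime)
    (hG : IsPGroup p G) {M : Subgroup G} (hM : IsCoatom M) : Nat.card (G ⧸ M) = p := by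
  have : Fact p.Prime := ⟨hp⟩
  have : Nontrivial (G ⧸ M) := QuotientGroup.nontrivial_iff.mpr hM.1
  have : IsSimpleGroup (G ⧸ M) := by
    refine ⟨fun N _ => ?_⟩
    have hle : M ≤ N.comap (QuotientGroup.mk' M) := QuotientGroup.le_comap_mk' M N
    have hsurj := QuotientGroup.mk'_surjective M
    rcases hle.eq_or_lt with h | h
    · left
      rw [← Subgroup.map_comap_eq_self_of_surjective hsurj N, ← h, QuotientGroup.map_mk'_self]
    · right
      rw [← Subgroup.map_comap_eq_self_of_surjective hsurj N, hM.2 _ h,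
        Subgroup.map_top_of_surjective _ hsurj]
  rcases (hG.to_quotient M).card_eq_or_dvd with h | h
  · exact absurd h Finite.one_lt_card.ne'
  · exact ((Nat.prime_dvd_prime_iff_eq hp IsSimpleGroup.prime_card).mp h).symm

/-- `G ⧸ M` embeds into every nontrivial finite abelian `p`-group, as a subgroup of order `p`. -/
theorem exists_hom_of_isCoatom {G Q : Type*} [CommGroup G] [Finite G] [CommGroup Q] [Finite Q]
    [Nontrivial Q] {p : ℕ} (hp : p.Prime) (hG : IsPGroup p G) (hQ : IsPGroup p Q)
    {M : Subgroup G} (hM : IsCoatom M) : ∃ θ : G →* Q, ∀ g, θ g = 1 ↔ g ∈ M := by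
  have : Fact p.Prime := ⟨hp⟩
  have hdvd : p ∣ Nat.card Q :=
    hQ.card_eq_or_dvd.resolve_left Finite.one_lt_card.ne'
  obtain ⟨z, hz⟩ := exists_prime_orderOf_dvd_card' (G := Q) p hdvd
  let e : (G ⧸ M) ≃* Subgroup.zpowers z :=
    mulEquivOfPrimeCardEq (card_quotient_of_isCoatom hp hG hM) ((Nat.card_zpowers z).trans hz)
  refine ⟨((Subgroup.zpowers z).subtype.comp e.toMonoidHom).comp (QuotientGroup.mk' M), fun g => ?_⟩
  simp

/-- Every proper quotient solitary subgroup of a finite abelian p-group is contained in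
the Frattini subgroup. -/
theorem isQuotientSolitary_le_frattini {G : Type*} [CommGroup G] [Finite G]
    (p : ℕ) (hp : p.Prime) (hG : IsPGroup p G)
    (H : Subgroup G) (hqs : IsQuotientSolitary H) (hproper : H ≠ ⊤) :
    H ≤ frattini G := by
  obtain ⟨_, hH⟩ := hqs
  refine le_iInf₂ fun M hM h hh => ?_
  by_contra hhM
  have : Nontrivial (G ⧸ H) := QuotientGroup.nontrivial_iff.mpr hproper
  obtain ⟨θ, hθ⟩ := exists_hom_of_isCoatom (Q := G ⧸ H) hp hG (hG.to_quotient H) hM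
  let ψ : G →* G ⧸ H := QuotientGroup.mk' H * θ
  have hψ : ∀ g, ψ g = QuotientGroup.mk' H g * θ g := fun _ => rfl
  have hψh : ψ h = θ h := by
    rw [hψ, QuotientGroup.mk'_apply, (QuotientGroup.eq_one_iff h).mpr hh, one_mul]
  -- The preimage of `range ψ` under `θ` contains `M` and `h`, hence is everything.
  have htop : ψ.range.comap θ = ⊤ := by
    refine hM.2 _ (lt_of_le_of_ne (fun m hm => ?_) fun heq => hhM ?_)
    · rw [Subgroup.mem_comap, (hθ m).mpr hm]
      exact one_mem _
    · rw [heq]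
      exact ⟨h, hψh⟩
  have hsurj : Function.Surjective ψ := by
    intro x
    obtain ⟨g, rfl⟩ := QuotientGroup.mk'_surjective H x
    have hg : θ g ∈ ψ.range := by
      rw [← Subgroup.mem_comap, htop]
      trivial
    have : ψ g * (θ g)⁻¹ ∈ ψ.range := mul_mem ⟨g, rfl⟩ (inv_mem hg)
    rwa [hψ, mul_inv_cancel_right] at this
  have hker : ψ.ker = H := hH ψ.ker inferInstance
    ⟨QuotientGroup.quotientKerEquivOfSurjective ψ hsurj⟩
  have h1 : ψ h = 1 := by
    rw [← MonoidHom.mem_ker, hker]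
    exact hh
  exact hhM ((hθ h).mp (hψh ▸ h1))
end

section
/- Let G be a finite abelian group. Then every solitary subgroup of G is quotient solitary and every quotient solitary subgroup of G is solitary (i.e. Sol(G) = QSol(G)) if and only if for every prime p dividing the order of G, the Sylow p-subgroup of G is homocyclic, i.e. isomorphic to a direct product of k copies of ℤ/p^α ℤ for some positive integers k and α. -/
/-- A subgroup `H` of a group `G` is *solitary* if no other subgroup of `G` is
isomorphic to it. -/
def IsSolitary {G : Type*} [Group G] (H : Subgroup G) : Prop :=
  ∀ K : Subgroup G, Nonempty (K ≃* H) → K = H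

/-! ### Characters with values in `ℤ/e` -/

/-- An element `v` of order `d`, in a group killed by `e = d * m`, is sent by some character
`A → ℤ/e` to an element of the same order, namely `m`: the map `v ↦ ζ ^ m`, with `ζ` a primitive
`e`-th root of unity, extends from `⟨v⟩` to `A`. -/
theorem exists_hom_zmod {A : Type*} [CommGroup A] [Finite A] {e d m : ℕ} [NeZero e]
    (hA : ∀ a : A, a ^ e = 1) (v : A) (hv : orderOf v = d) (h : d * m = e) :
    ∃ F : A →* Multiplicative (ZMod e), F v = Multiplicative.ofAdd (m : ZMod e) := by
  have hζ : IsPrimitiveRoot (Complex.isPrimitiveRoot_exp e (NeZero.ne e) |>.isUnit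
      (NeZero.ne e)).unit e := (Complex.isPrimitiveRoot_exp e (NeZero.ne e)).isUnit_unit
      (NeZero.ne e)
  generalize (Complex.isPrimitiveRoot_exp e (NeZero.ne e) |>.isUnit (NeZero.ne e)).unit = ζ at hζ
  have hg : ∀ x : Subgroup.zpowers v, x ∈ Subgroup.zpowers
      (⟨v, Subgroup.mem_zpowers v⟩ : Subgroup.zpowers v) := by
    rintro ⟨x, k, rfl⟩
    exact ⟨k, by ext; simp⟩
  have hord : orderOf (ζ ^ m) ∣ orderOf (⟨v, Subgroup.mem_zpowers v⟩ : Subgroup.zpowers v) := by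
    rw [Subgroup.orderOf_mk, hv]
    apply orderOf_dvd_of_pow_eq_one
    rw [← pow_mul, mul_comm, h, hζ.pow_eq_one]
  have : NeZero (Monoid.exponent A) := ⟨Monoid.exponent_ne_zero_of_finite⟩
  obtain ⟨χ, hχ⟩ := MonoidHom.domRestrict_surjective ℂ (Subgroup.zpowers v)
    (monoidHomOfForallMemZpowers hg hord)
  have hχv : χ v = ζ ^ m := by
    have := DFunLike.congr_fun hχ ⟨v, Subgroup.mem_zpowers v⟩
    rw [monoidHomOfForallMemZpowers_apply_gen] at this
    exact this
  have hmem : ∀ a, χ a ∈ Subgroup.zpowers ζ := by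
    intro a
    rw [hζ.zpowers_eq, mem_rootsOfUnity, ← map_pow, hA, map_one]
  refine ⟨(hζ.zmodEquivZPowers.symm.toMultiplicativeRight : _ →* _).comp
    (χ.codRestrict _ hmem), ?_⟩
  have : χ.codRestrict _ hmem v = ⟨ζ ^ m, m, by simp⟩ := Subtype.ext hχv
  rw [MonoidHom.comp_apply, this]
  exact congrArg Multiplicative.ofAdd (hζ.zmodEquivZPowers_symm_apply_pow' m)

theorem exists_dual {A : Type*} [AddCommGroup A] [Finite A] {e d m : ℕ} [NeZero e]
    [Module (ZMod e) A] (v : A) (hv : addOrderOf v = d) (h : d * m = e) :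
    ∃ F : A →ₗ[ZMod e] ZMod e, F v = m := by
  obtain ⟨F, hF⟩ := exists_hom_zmod (A := Multiplicative A) (e := e)
    (fun a => by
      have : (e : ZMod e) • a.toAdd = 0 := by simp
      rw [Nat.cast_smul_eq_nsmul] at this
      exact congrArg Multiplicative.ofAdd this) (Multiplicative.ofAdd v)
    (by rw [orderOf_ofAdd_eq_addOrderOf, hv]) h
  exact ⟨AddMonoidHom.toZModLinearMap e (AddMonoidHom.toMultiplicative.symm F), hF⟩

/-! ### Transvections and characteristic subgroups -/

/-- If every element killed by a divisor `d` of `e` is divisible by `e / d`, then a characteristic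
subgroup containing an element `v` of order `d` contains every `x` killed by `d`. A transvection
moves `v` to `v + x - c • v` for some scalar `c`. -/
theorem mem_of_characteristic {A : Type*} [AddCommGroup A] [Finite A] {e : ℕ} [NeZero e]
    [Module (ZMod e) A]
    (hdiv : ∀ d m, d * m = e → ∀ x : A, d • x = 0 → ∃ y : A, m • y = x)
    (H : AddSubgroup A) (hH : ∀ φ : A ≃+ A, ∀ x ∈ H, φ x ∈ H) {d m : ℕ} (hdm : d * m = e)
    {v : A} (hvH : v ∈ H) (hv : addOrderOf v = d) {x : A} (hx : d • x = 0) : x ∈ H := by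
  obtain ⟨F, hF⟩ := exists_dual v hv hdm
  obtain ⟨w, hw⟩ := hdiv d m hdm v (hv ▸ addOrderOf_nsmul_eq_zero v)
  obtain ⟨y, hy⟩ := hdiv d m hdm x hx
  have hm : F w * (m : ZMod e) = m := by
    rw [← hF, ← hw, map_nsmul, nsmul_eq_mul]
    have := hF
    rw [← hw, map_nsmul, nsmul_eq_mul] at this
    rw [this, mul_comm, this]
  have hpow : ∀ N : ℕ, F w ^ N * (m : ZMod e) = m := by
    intro N
    induction N with
    | zero => simp
    | succ N ih => rw [pow_succ, mul_assoc, hm, ih]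
  -- `F w` need not be a unit, but some power `F w ^ N` is a multiple of `F w ^ (N + 1)`. Scaling `F`
  -- by `F w ^ N` keeps its value at `v` and lets a multiple of `w` be subtracted from `y` to land in
  -- the kernel of the scaled functional.
  obtain ⟨N, N', hlt, hNN⟩ : ∃ N N' : ℕ, N < N' ∧ F w ^ N = F w ^ N' := by
    obtain ⟨N, N', hne, h⟩ := Finite.exists_ne_map_eq_of_infinite (fun k : ℕ => F w ^ k)
    rcases hne.lt_or_gt with hl | hl
    · exact ⟨N, N', hl, h⟩
    · exact ⟨N', N, hl, h.symm⟩
  obtain ⟨k, rfl⟩ := Nat.exists_eq_add_of_lt hlt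
  set c : ZMod e := F w ^ k * F y with hc
  set z : A := y - c • w with hz
  set F₁ : A →ₗ[ZMod e] ZMod e := F w ^ N • F with hF₁
  have hF₁z : F₁ z = 0 := by
    have : F₁ z = F w ^ N * F y - F w ^ (N + k + 1) * F y := by
      simp only [hF₁, hz, hc, LinearMap.smul_apply, map_sub, map_smul, smul_eq_mul]
      ring
    rw [this, ← hNN, sub_self]
  have hinj : Function.Injective (LinearMap.id + F₁.smulRight z : A →ₗ[ZMod e] A) := by
    rw [injective_iff_map_eq_zero]
    intro a ha
    have ha' : a + F₁ a • z = 0 := ha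
    have h0 := congrArg F₁ ha'
    rw [map_add, map_smul, hF₁z, smul_zero, add_zero, map_zero] at h0
    rwa [h0, zero_smul, add_zero] at ha'
  let φ : A ≃+ A := AddEquiv.ofBijective
    (LinearMap.id + F₁.smulRight z : A →ₗ[ZMod e] A).toAddMonoidHom
    (Finite.injective_iff_bijective.1 (by exact hinj))
  have hφ : φ v = v + (x - c • v) := by
    have h1 : φ v = v + F₁ v • z := rfl
    have h2 : F₁ v = m := by
      simp only [hF₁, LinearMap.smul_apply, smul_eq_mul, hF, hpow]
    rw [h1, h2, hz, smul_sub, smul_comm, Nat.cast_smul_eq_nsmul, Nat.cast_smul_eq_nsmul, hy, hw]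
  have hcv : c • v ∈ H := by
    have : c • v = c.val • v := by
      rw [← Nat.cast_smul_eq_nsmul (ZMod e), ZMod.natCast_zmod_val]
    rw [this]
    exact nsmul_mem hvH _
  have hmem := hH φ v hvH
  rw [hφ] at hmem
  have := add_mem (sub_mem hmem hvH) hcv
  simpa using this

/-- An elementary abelian `p`-subgroup `U` of `A` which misses some `x` killed by `p` can be embedded
in `A` with an image not contained in `U`, by `u ↦ u + F u • x` for a functional `F ≠ 0` on `U`. -/
theorem exists_injective_ne {p : ℕ} [Fact p.Prime] {U A : Type*} [AddCommGroup U] [Finite U]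
    [Nontrivial U] [AddCommGroup A] (i : U →+ A) (hi : Function.Injective i)
    (hU : ∀ u : U, p • u = 0) {x : A} (hpx : p • x = 0) (hx : x ∉ i.range) :
    ∃ φ : U →+ A, Function.Injective φ ∧ ∃ u, φ u ∉ i.range := by
  obtain ⟨u, hu⟩ := exists_ne (0 : U)
  obtain ⟨F, hF⟩ : ∃ F : U →+ ZMod p, F u = 1 := by
    let _ : Module (ZMod p) U := AddCommGroup.zmodModule hU
    obtain ⟨F, hF⟩ := exists_dual (e := p) (m := 1) u
      (addOrderOf_eq_prime (hU u) hu) (mul_one p)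
    exact ⟨F.toAddMonoidHom, by simpa using hF⟩
  have hlift : ∃ θ : ZMod p →+ A, θ 1 = x :=
    ⟨ZMod.lift p ⟨zmultiplesHom A x, by simpa using hpx⟩, by
      have := ZMod.lift_coe p (A := A) ⟨zmultiplesHom A x, by simpa using hpx⟩ 1
      simpa using this⟩
  obtain ⟨θ, hθ⟩ := hlift
  have hθz : ∀ z : ZMod p, θ z ∈ i.range → z = 0 := by
    intro z hz
    by_contra hne
    apply hx
    have : x = (z⁻¹).val • θ z := by
      rw [← map_nsmul, nsmul_eq_mul, ZMod.natCast_zmod_val, inv_mul_cancel₀ hne, hθ]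
    rw [this]
    exact nsmul_mem hz _
  refine ⟨i + θ.comp F, ?_, u, ?_⟩
  · rw [injective_iff_map_eq_zero]
    intro a ha
    have ha' : i a + θ (F a) = 0 := ha
    have h0 : F a = 0 := hθz _ ⟨-a, by rw [map_neg]; exact neg_eq_of_add_eq_zero_right ha'⟩
    rw [h0, map_zero, add_zero] at ha'
    exact (injective_iff_map_eq_zero i).1 hi a ha'
  · rintro ⟨b, hb⟩
    have hb' : i b = i u + θ (F u) := hb
    rw [hF, hθ] at hb'
    exact hx ⟨b - u, by rw [map_sub, hb']; abel⟩

/-! ### Solitary and quotient solitary subgroups -/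

section
variable {G : Type*} [CommGroup G]

theorem map_eq_of_isSolitary {H : Subgroup G} (h : IsSolitary H) (φ : G ≃* G) :
    H.map φ.toMonoidHom = H :=
  h _ ⟨(H.equivMapOfInjective _ φ.injective).symm⟩

theorem map_eq_of_isQuotientSolitary {H : Subgroup G} (h : IsQuotientSolitary H) (φ : G ≃* G) :
    H.map φ.toMonoidHom = H := by
  obtain ⟨_, h⟩ := h
  exact h _ inferInstance ⟨(QuotientGroup.congr H (H.map φ.toMonoidHom) φ rfl).symm⟩

theorem isSolitary_ker_pow [Finite G] (n : ℕ) : IsSolitary (powMonoidHom n : G →* G).ker := by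
  rintro K ⟨f⟩
  have hle : K ≤ (powMonoidHom n : G →* G).ker := by
    intro x hx
    have h1 : (f ⟨x, hx⟩) ^ n = 1 := Subtype.ext (f ⟨x, hx⟩).2
    rw [← map_pow, map_eq_one_iff f f.injective] at h1
    exact congrArg Subtype.val h1
  exact Subgroup.eq_of_le_of_card_ge hle (Nat.card_congr f.toEquiv).ge

theorem isQuotientSolitary_range_pow [Finite G] (n : ℕ) :
    IsQuotientSolitary (powMonoidHom n : G →* G).range := by
  refine ⟨inferInstance, ?_⟩
  rintro K hK ⟨f⟩
  have hle : (powMonoidHom n : G →* G).range ≤ K := by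
    rintro _ ⟨g, rfl⟩
    rw [← QuotientGroup.eq_one_iff]
    have h1 : ∀ q : G ⧸ (powMonoidHom n : G →* G).range, q ^ n = 1 := by
      intro q
      induction q using QuotientGroup.induction_on with
      | H g => exact (QuotientGroup.eq_one_iff (g ^ n)).2 ⟨g, rfl⟩
    have h2 := h1 (f (g : G ⧸ K))
    rw [← map_pow, map_eq_one_iff f f.injective] at h2
    exact h2
  have hcard := Nat.card_congr f.toEquiv
  refine (Subgroup.eq_of_le_of_card_ge hle ?_).symm
  have e1 := Subgroup.card_eq_card_quotient_mul_card_subgroup K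
  have e2 := Subgroup.card_eq_card_quotient_mul_card_subgroup (powMonoidHom n : G →* G).range
  rw [hcard, e2] at e1
  exact (Nat.eq_of_mul_eq_mul_left Nat.card_pos e1).ge

/-! ### Torsion divisible groups -/

/-- With `e` the exponent of `G`: for every prime `p ∣ e`, every element killed by `p` is an
`(e / p)`-th power. The quotient `e / p` is encoded as a number `m` with `p * m = e`. -/
def TorsionDivisible (G : Type*) [CommGroup G] : Prop :=
  ∀ p m : ℕ, p.Prime → p * m = Monoid.exponent G → ∀ x : G, x ^ p = 1 → ∃ y : G, y ^ m = x

/-- The defining property of torsion divisible groups passes from prime divisors of the exponent to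
arbitrary divisors. -/
theorem TorsionDivisible.exists_pow_eq [Finite G] (hG : TorsionDivisible G) (d : ℕ) :
    ∀ m : ℕ, d * m = Monoid.exponent G → ∀ x : G, x ^ d = 1 → ∃ y : G, y ^ m = x := by
  induction d using Nat.recOnMul with
  | zero =>
    intro m h x _
    rw [zero_mul] at h
    exact absurd h.symm Monoid.exponent_ne_zero_of_finite
  | one =>
    intro m _ x hx
    exact ⟨1, by simpa using hx.symm⟩
  | prime p hp => exact fun m h x hx => hG p m hp h x hx
  | mul a b ha hb =>
    intro m h x hx
    obtain ⟨y, hy⟩ := ha (b * m) (by rw [← h]; ring) (x ^ b) (by rw [← pow_mul, mul_comm, hx])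
    obtain ⟨z, hz⟩ := hb (a * m) (by rw [← h]; ring) (x * (y ^ m)⁻¹) (by
      rw [mul_pow, inv_pow, ← pow_mul, mul_comm m b, hy, mul_inv_cancel])
    refine ⟨z ^ a * y, ?_⟩
    rw [mul_pow, ← pow_mul, hz, inv_mul_cancel_right]

/-- A characteristic subgroup of a torsion divisible group is the kernel of a power map. -/
theorem eq_ker_pow [Finite G] (hG : TorsionDivisible G) {H : Subgroup G}
    (hH : ∀ φ : G ≃* G, H.map φ.toMonoidHom = H) :
    ∃ d m, d * m = Monoid.exponent G ∧ H = (powMonoidHom d : G →* G).ker := by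
  obtain ⟨v, hv⟩ := Monoid.exists_orderOf_eq_exponent (Monoid.ExponentExists.of_finite (G := H))
  obtain ⟨m, hm⟩ : Monoid.exponent H ∣ Monoid.exponent G :=
    Monoid.exponent_submonoid_dvd H.toSubmonoid
  refine ⟨Monoid.exponent H, m, hm.symm, le_antisymm ?_ ?_⟩
  · intro x hx
    exact congrArg Subtype.val (Monoid.pow_exponent_eq_one (⟨x, hx⟩ : H))
  · intro x hx
    have : NeZero (Monoid.exponent G) := ⟨Monoid.exponent_ne_zero_of_finite⟩
    let _ : Module (ZMod (Monoid.exponent G)) (Additive G) :=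
      AddCommGroup.zmodModule (fun x => Monoid.pow_exponent_eq_one x.toMul)
    refine mem_of_characteristic (A := Additive G) (e := Monoid.exponent G)
      (fun d m h x hx => hG.exists_pow_eq d m h x.toMul hx) (Subgroup.toAddSubgroup H) ?_ hm.symm
      (v := Additive.ofMul (v : G)) v.2 ?_ (x := Additive.ofMul x) hx
    · intro φ x hx
      let φ' : G ≃* G := MulEquiv.toAdditive.symm φ
      have h1 : φ' x.toMul ∈ H.map φ'.toMonoidHom := Subgroup.mem_map_of_mem _ hx
      rw [hH φ'] at h1
      exact h1
    · rw [addOrderOf_ofMul_eq_orderOf, Subgroup.orderOf_coe, hv]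

theorem ker_pow_eq_range_pow [Finite G] (hG : TorsionDivisible G) {d m : ℕ}
    (h : d * m = Monoid.exponent G) :
    (powMonoidHom d : G →* G).ker = (powMonoidHom m : G →* G).range := by
  ext x
  refine ⟨fun hx => hG.exists_pow_eq d m h x hx, ?_⟩
  rintro ⟨y, rfl⟩
  change (y ^ m) ^ d = 1
  rw [← pow_mul, mul_comm, h, Monoid.pow_exponent_eq_one]

theorem TorsionDivisible.isSolitary_iff [Finite G] (hG : TorsionDivisible G) (H : Subgroup G) :
    IsSolitary H ↔ IsQuotientSolitary H := by
  constructor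
  · intro h
    obtain ⟨d, m, hdm, rfl⟩ := eq_ker_pow hG (map_eq_of_isSolitary h)
    rw [ker_pow_eq_range_pow hG hdm]
    exact isQuotientSolitary_range_pow m
  · intro h
    obtain ⟨d, m, hdm, rfl⟩ := eq_ker_pow hG (map_eq_of_isQuotientSolitary h)
    exact isSolitary_ker_pow d

theorem torsionDivisible_of_solitary [Finite G]
    (h : ∀ n : ℕ, IsSolitary (powMonoidHom n : G →* G).range) : TorsionDivisible G := by
  intro p m hp hpm x hx
  by_contra hne
  have : Fact p.Prime := ⟨hp⟩
  set V := (powMonoidHom m : G →* G).range with hV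
  have hnt : Nontrivial V := by
    rw [Subgroup.nontrivial_iff_ne_bot]
    intro hbot
    have h1 : Monoid.exponent G ∣ m := by
      apply Monoid.exponent_dvd_of_forall_pow_eq_one
      intro g
      have : g ^ m ∈ V := ⟨g, rfl⟩
      rwa [hbot, Subgroup.mem_bot] at this
    have hm0 : 0 < m := Nat.pos_of_ne_zero fun h0 => by
      rw [h0, mul_zero] at hpm
      exact Monoid.exponent_ne_zero_of_finite hpm.symm
    have h2 := Nat.le_of_dvd hm0 h1
    rw [← hpm] at h2
    nlinarith [hp.two_le]
  obtain ⟨φ, hφ, u, hu⟩ := exists_injective_ne (p := p) (U := Additive V) (A := Additive G)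
    (MonoidHom.toAdditive V.subtype) Subtype.val_injective (by
      rintro ⟨_, y, rfl⟩
      refine Subtype.ext ?_
      change (y ^ m) ^ p = 1
      rw [← pow_mul, mul_comm, hpm, Monoid.pow_exponent_eq_one]) (x := Additive.ofMul x) hx (by
      rintro ⟨⟨_, y, rfl⟩, h⟩
      exact hne ⟨y, h⟩)
  let ψ : V →* G := MonoidHom.toAdditive.symm φ
  have hψ : ψ.range = V := h m _ ⟨(MonoidHom.ofInjective (f := ψ) hφ).symm⟩
  apply hu
  have : ψ u.toMul ∈ V := hψ.le ⟨u.toMul, rfl⟩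
  exact ⟨Additive.ofMul ⟨_, this⟩, rfl⟩

/-! ### Homocyclic Sylow subgroups -/

theorem mem_sylow_of_pow_eq_one [Finite G] {p : ℕ} [Fact p.Prime] (P : Sylow p G) {j : ℕ} {g : G}
    (hg : g ^ p ^ j = 1) : g ∈ P := by
  have h1 : IsPGroup p (Subgroup.zpowers g) := by
    obtain ⟨k, -, hk⟩ := (Nat.dvd_prime_pow Fact.out).1 (orderOf_dvd_of_pow_eq_one hg)
    exact IsPGroup.of_card (n := k) (by rw [Nat.card_zpowers, hk])
  obtain ⟨Q, hQ⟩ := h1.exists_le_sylow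
  have : Subsingleton (Sylow p G) :=
    (Sylow.unique_of_normal P inferInstance).instSubsingleton
  rw [Subsingleton.elim P Q]
  exact hQ (Subgroup.mem_zpowers g)

theorem exists_nsmul_eq_zmod {p α : ℕ} [Fact p.Prime] (hα : 0 < α) {c : ZMod (p ^ α)}
    (hc : p • c = 0) : ∃ b : ZMod (p ^ α), p ^ (α - 1) • b = c := by
  have hp : p.Prime := Fact.out
  obtain ⟨a, rfl⟩ := Nat.exists_eq_succ_of_ne_zero hα.ne'
  have : NeZero (p ^ (a + 1)) := ⟨pow_ne_zero _ hp.ne_zero⟩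
  have h1 : ((p * c.val : ℕ) : ZMod (p ^ (a + 1))) = 0 := by
    rw [Nat.cast_mul, ZMod.natCast_zmod_val, ← nsmul_eq_mul]
    exact hc
  rw [ZMod.natCast_eq_zero_iff] at h1
  obtain ⟨t, ht⟩ := Nat.dvd_of_mul_dvd_mul_left hp.pos ((pow_succ' p a).symm.dvd.trans h1)
  refine ⟨t, ?_⟩
  rw [← ZMod.natCast_zmod_val c, ht, nsmul_eq_mul]
  simp

theorem torsionDivisible_of_homocyclic [Finite G]
    (h : ∀ p : ℕ, p.Prime → p ∣ Nat.card G → ∀ P : Sylow p G,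
        ∃ k α : ℕ, 0 < k ∧ 0 < α ∧
          Nonempty ((P : Subgroup G) ≃* (Fin k → Multiplicative (ZMod (p ^ α))))) :
    TorsionDivisible G := by
  intro p m hp hpm x hx
  have : Fact p.Prime := ⟨hp⟩
  have hdvd : p ∣ Nat.card G :=
    (Dvd.intro m hpm).trans Group.exponent_dvd_nat_card
  obtain ⟨P⟩ : Nonempty (Sylow p G) := inferInstance
  obtain ⟨k, α, -, hα, ⟨f⟩⟩ := h p hp hdvd P
  have hPexp : ∀ g ∈ P, g ^ p ^ α = 1 := by
    intro g hg
    have : (⟨g, hg⟩ : P) ^ p ^ α = 1 := by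
      apply f.injective
      rw [map_pow, map_one]
      ext i
      change (p ^ α) • (f ⟨g, hg⟩ i).toAdd = 0
      simp
    exact congrArg Subtype.val this
  have hxP : x ∈ P := mem_sylow_of_pow_eq_one P (j := 1) (by rwa [pow_one])
  obtain ⟨y, hy⟩ : ∃ y : G, y ^ p ^ (α - 1) = x := by
    have hc : ∀ i, ∃ c : ZMod (p ^ α), p ^ (α - 1) • c = (f ⟨x, hxP⟩ i).toAdd := by
      intro i
      apply exists_nsmul_eq_zmod hα
      have h1 : (⟨x, hxP⟩ : P) ^ p = 1 := Subtype.ext hx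
      have h2 := congrArg f h1
      rw [map_pow, map_one] at h2
      exact congrFun h2 i
    choose c hc using hc
    refine ⟨(f.symm (fun i => Multiplicative.ofAdd (c i)) : P), ?_⟩
    have : (f.symm (fun i => Multiplicative.ofAdd (c i))) ^ p ^ (α - 1) = ⟨x, hxP⟩ := by
      apply f.injective
      rw [map_pow, f.apply_symm_apply]
      ext i
      exact hc i
    exact congrArg Subtype.val this
  obtain ⟨β, r, hr, he⟩ := Nat.exists_eq_pow_mul_and_not_dvd
    (Monoid.exponent_ne_zero_of_finite (G := G)) p hp.ne_one
  have hβ0 : β ≠ 0 := by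
    rintro rfl
    rw [pow_zero, one_mul] at he
    exact hr (he ▸ Dvd.intro m hpm)
  obtain ⟨b, rfl⟩ := Nat.exists_eq_succ_of_ne_zero hβ0
  have hm : m = p ^ b * r := by
    apply Nat.eq_of_mul_eq_mul_left hp.pos
    rw [hpm, he, pow_succ]
    ring
  -- Elements of `p`-power order lie in `P`, so the `p`-part of the exponent divides `p ^ α`.
  have hle : b + 1 ≤ α := by
    have h1 : Monoid.exponent G ∣ p ^ α * r := by
      apply Monoid.exponent_dvd_of_forall_pow_eq_one
      intro g
      rw [mul_comm, pow_mul]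
      apply hPexp
      apply mem_sylow_of_pow_eq_one P (j := b + 1)
      rw [← pow_mul, mul_comm, ← he, Monoid.pow_exponent_eq_one]
    rw [he] at h1
    have hr0 : 0 < r := Nat.pos_of_ne_zero fun h0 => hr (h0 ▸ dvd_zero p)
    exact (Nat.pow_dvd_pow_iff_le_right hp.one_lt).1 (Nat.dvd_of_mul_dvd_mul_right hr0 h1)
  obtain ⟨s, -, hs⟩ := Nat.exists_mul_mod_eq_one_of_coprime
    ((Nat.Prime.coprime_iff_not_dvd hp).2 hr).symm hp.one_lt
  have hα' : α - 1 = (α - (b + 1)) + b := by omega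
  refine ⟨y ^ (p ^ (α - (b + 1)) * s), ?_⟩
  calc (y ^ (p ^ (α - (b + 1)) * s)) ^ m = (y ^ p ^ (α - 1)) ^ (r * s) := by
        rw [hm, hα', ← pow_mul, ← pow_mul, pow_add]
        congr 1
        ring
    _ = x := by rw [hy, pow_eq_pow_mod _ hx, hs, pow_one]

/-- The common order of the cyclic factors of `P` is the `p`-part `p ^ α` of the exponent of `G`. A
cyclic factor of smaller order `p ^ b` is killed by `p ^ (α - 1)`, so its elements of order `p` are
not `p ^ (α - 1)`-th powers in `P`. -/
theorem homocyclic_of_torsionDivisible [Finite G] (hG : TorsionDivisible G) {p : ℕ}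
    (hp : p.Prime) (hdvd : p ∣ Nat.card G) (P : Sylow p G) :
    ∃ k α : ℕ, 0 < k ∧ 0 < α ∧
      Nonempty ((P : Subgroup G) ≃* (Fin k → Multiplicative (ZMod (p ^ α)))) := by
  have : Fact p.Prime := ⟨hp⟩
  obtain ⟨ι, _, n, hn, ⟨f⟩⟩ := CommGroup.equiv_prod_multiplicative_zmod_of_finite P
  obtain ⟨α, r, hr, he⟩ := Nat.exists_eq_pow_mul_and_not_dvd
    (Monoid.exponent_ne_zero_of_finite (G := G)) p hp.ne_one
  have hcop : Nat.Coprime p r := (Nat.Prime.coprime_iff_not_dvd hp).2 hr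
  obtain ⟨g₀, hg₀⟩ := exists_prime_orderOf_dvd_card' p hdvd
  have hα0 : α ≠ 0 := by
    rintro rfl
    rw [pow_zero, one_mul] at he
    exact hr (he ▸ hg₀ ▸ Monoid.order_dvd_exponent g₀)
  have hne : Nonempty ι := by
    by_contra hemp
    rw [not_nonempty_iff] at hemp
    have hg₀P : g₀ ∈ P := mem_sylow_of_pow_eq_one P (j := 1)
      (by rw [pow_one, ← hg₀, pow_orderOf_eq_one])
    have h1 : (⟨g₀, hg₀P⟩ : P) = 1 := f.injective (Subsingleton.elim _ _)
    have h2 : g₀ = 1 := congrArg Subtype.val h1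
    rw [h2, orderOf_one] at hg₀
    exact hp.one_lt.ne hg₀
  have key : ∀ i, n i = p ^ α := by
    classical
    intro i
    set g : P := f.symm (Pi.mulSingle i (Multiplicative.ofAdd 1)) with hgdef
    have hg : orderOf g = n i := by
      rw [hgdef, MulEquiv.orderOf_eq, orderOf_piMulSingle, orderOf_ofAdd_eq_addOrderOf,
        ZMod.addOrderOf_one]
    obtain ⟨N, hN⟩ := P.2.exists_card_eq
    obtain ⟨b, -, hb⟩ := (Nat.dvd_prime_pow hp).1 (hN ▸ orderOf_dvd_natCard g)
    have hni : n i = p ^ b := hg.symm.trans hb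
    have hb0 : b ≠ 0 := by
      rintro rfl
      have := hn i
      rw [hni, pow_zero] at this
      exact lt_irrefl _ this
    have hle : b ≤ α := by
      have h1 : p ^ b ∣ p ^ α * r := by
        rw [← he, ← hb, ← Subgroup.orderOf_coe]
        exact Monoid.order_dvd_exponent _
      exact (Nat.pow_dvd_pow_iff_le_right hp.one_lt).1
        ((Nat.Coprime.pow_left b hcop).dvd_of_dvd_mul_right h1)
    rw [hni]
    by_contra hbne
    obtain ⟨a, rfl⟩ := Nat.exists_eq_succ_of_ne_zero hα0
    obtain ⟨c, rfl⟩ := Nat.exists_eq_succ_of_ne_zero hb0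
    have hca : c + 1 ≤ a := by
      have : c + 1 ≠ a + 1 := fun h => hbne (by rw [Nat.succ_eq_add_one, h])
      simp only [Nat.succ_eq_add_one] at hle
      omega
    have hgp : (g : G) ^ p ^ (c + 1) = 1 := by
      rw [← Nat.succ_eq_add_one, ← hb, ← Subgroup.orderOf_coe, pow_orderOf_eq_one]
    obtain ⟨y, hy⟩ := hG p (p ^ a * r) hp (by rw [he, pow_succ]; ring) ((g : G) ^ p ^ c) (by
      rw [← pow_mul, ← pow_succ, hgp])
    have hz : y ^ r ∈ P := by
      apply mem_sylow_of_pow_eq_one P (j := a + 1)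
      rw [← pow_mul, mul_comm, ← Nat.succ_eq_add_one, ← he, Monoid.pow_exponent_eq_one]
    have hzg : (⟨y ^ r, hz⟩ : P) ^ p ^ a = g ^ p ^ c := by
      ext
      change (y ^ r) ^ p ^ a = (g : G) ^ p ^ c
      rw [← hy, ← pow_mul, mul_comm]
    have h1 := congrFun (congrArg f hzg) i
    rw [map_pow, map_pow, hgdef, f.apply_symm_apply, Pi.pow_apply, Pi.pow_apply,
      Pi.mulSingle_eq_same] at h1
    have h2 : p ^ a • (f ⟨y ^ r, hz⟩ i).toAdd = p ^ c • (1 : ZMod (n i)) := h1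
    have h3 : ((p ^ a : ℕ) : ZMod (n i)) = 0 := by
      rw [ZMod.natCast_eq_zero_iff, hni]
      exact pow_dvd_pow p hca
    rw [nsmul_eq_mul, nsmul_eq_mul, mul_one, h3, zero_mul, eq_comm, ZMod.natCast_eq_zero_iff, hni,
      Nat.pow_dvd_pow_iff_le_right hp.one_lt] at h2
    exact Nat.not_succ_le_self c h2
  obtain rfl : n = fun _ => p ^ α := funext key
  exact ⟨Fintype.card ι, α, Fintype.card_pos, Nat.pos_of_ne_zero hα0,
    ⟨f.trans (MulEquiv.arrowCongr (Fintype.equivFin ι) (MulEquiv.refl _))⟩⟩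

end

/-- For a finite abelian group `G`, `Sol(G) = QSol(G)` iff every Sylow subgroup of `G`
is homocyclic, i.e. a direct product of copies of `ℤ/p^α ℤ`. -/
theorem sol_eq_qsol_iff_homocyclic {G : Type*} [CommGroup G] [Finite G] :
    (∀ H : Subgroup G, IsSolitary H ↔ IsQuotientSolitary H) ↔
      (∀ p : ℕ, p.Prime → p ∣ Nat.card G → ∀ P : Sylow p G,
        ∃ k α : ℕ, 0 < k ∧ 0 < α ∧
          Nonempty ((P : Subgroup G) ≃* (Fin k → Multiplicative (ZMod (p ^ α))))) := by
  constructor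
  · intro h p hp hdvd P
    exact homocyclic_of_torsionDivisible
      (torsionDivisible_of_solitary fun n => (h _).2 (isQuotientSolitary_range_pow n)) hp hdvd P
  · intro h
    exact (torsionDivisible_of_homocyclic h).isSolitary_iff
end
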